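/- With the notation of the context, for every k ≥ 0 the sequence t₁,…,t_r is a regular sequence on the R[t₁,…,t_r]-module M_k: for each 1 ≤ i ≤ r, multiplication by t_i is injective on the quotient M_k/(t₁,…,t_{i−1})M_k, and M_k/(t₁,…,t_r)M_k ≠ 0. -/

import Mathlib

noncomputable section

open Finsupp

/-- Index set for the basis of `F_k B_f`: multi-indices `β ∈ ℕ^r` with `|β| ≤ k`. -/
abbrev Idx (r k : ℕ) : Type := {β : Fin r → ℕ // (∑ i, β i) ≤ k}

/-- `F_k B_f` modeled as the free `R`-module with basis `{e_β : |β| ≤ k}`. -/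
abbrev Mk (R : Type*) [CommRing R] (r k : ℕ) : Type _ := Idx r k →₀ R

variable (R : Type*) [CommRing R] (r : ℕ) (f : Fin r → R)

/-- The operator `t_i` on `M_k` : `h e_β ↦ fᵢ h e_β - βᵢ h e_{β-eᵢ}`. -/
def tOp (k : ℕ) (i : Fin r) : Mk R r k →ₗ[R] Mk R r k :=
  Finsupp.lift (Mk R r k) R (Idx r k) fun β =>
    f i • Finsupp.single β (1 : R)
      - (β.1 i) • Finsupp.single
          (⟨β.1 - Pi.single i 1,
            le_trans (Finset.sum_le_sum fun _ _ => Nat.sub_le _ _) β.2⟩ : Idx r k) (1 : R)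

/-- The submodule `(t₁,…,t_{i-1}) M_k` of `M_k`. -/
def partialImage (k : ℕ) (i : Fin r) : Submodule R (Mk R r k) :=
  ⨆ j : Fin r, ⨆ _ : j < i, LinearMap.range (tOp R r f k j)

section AbstractFiltration

variable {R V : Type*} [CommRing R] [AddCommGroup V] [Module R V] {r : ℕ}

/-- The submodule `∑_{j < n} T_j P` attached to a family of endomorphisms `T` and a submodule `P`. -/
def imageSum (T : Fin r → V →ₗ[R] V) (P : Submodule R V) (n : ℕ) : Submodule R V :=
  ⨆ j : Fin r, ⨆ _ : j.val < n, P.map (T j)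

variable {T : Fin r → V →ₗ[R] V} {P N : Submodule R V} {n : ℕ}

theorem imageSum_le {Q : Submodule R V} :
    imageSum T P n ≤ Q ↔ ∀ j : Fin r, j.val < n → P.map (T j) ≤ Q := by
  simp only [imageSum, iSup_le_iff]

theorem map_le_imageSum {j : Fin r} (hj : j.val < n) : P.map (T j) ≤ imageSum T P n :=
  imageSum_le.1 le_rfl j hj

theorem imageSum_mono_left (h : N ≤ P) : imageSum T N n ≤ imageSum T P n :=
  imageSum_le.2 fun _ hj => (Submodule.map_mono h).trans (map_le_imageSum hj)

theorem imageSum_succ (i : Fin r) :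
    imageSum T P (i.val + 1) = imageSum T P i.val ⊔ P.map (T i) := by
  apply le_antisymm
  · refine imageSum_le.2 fun j hj => ?_
    rcases Nat.lt_succ_iff_lt_or_eq.1 hj with h | h
    · exact (map_le_imageSum h).trans le_sup_left
    · rw [Fin.ext h]
      exact le_sup_right
  · exact sup_le (imageSum_le.2 fun j hj => map_le_imageSum (hj.trans (Nat.lt_succ_self _)))
      (map_le_imageSum (Nat.lt_succ_self _))

theorem apply_mem_imageSum (hT : ∀ i j x, T i (T j x) = T j (T i x))
    (hP : ∀ j, P.map (T j) ≤ P) (i : Fin r) {x : V} (hx : x ∈ imageSum T P n) :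
    T i x ∈ imageSum T P n := by
  suffices h : imageSum T P n ≤ (imageSum T P n).comap (T i) from h hx
  refine imageSum_le.2 fun j hj => ?_
  rintro _ ⟨y, hy, rfl⟩
  rw [Submodule.mem_comap, hT]
  exact map_le_imageSum hj (Submodule.mem_map_of_mem (hP i (Submodule.mem_map_of_mem hy)))

/-- If `T` is weakly regular on `P / N`, then `N / (∑_{j < n} T_j N) → P / (∑_{j < n} T_j P)` is
injective. -/
theorem imageSum_inf_le (hT : ∀ i j x, T i (T j x) = T j (T i x))
    (hP : ∀ j, P.map (T j) ≤ P) (hN : ∀ j, N.map (T j) ≤ N)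
    (hQ : ∀ i : Fin r, ∀ x ∈ P, T i x ∈ imageSum T P i ⊔ N → x ∈ imageSum T P i ⊔ N)
    (hn : n ≤ r) : imageSum T P n ⊓ N ≤ imageSum T N n := by
  induction n with
  | zero => exact inf_le_left.trans (imageSum_le.2 fun j hj => absurd hj (Nat.not_lt_zero _))
  | succ n ih =>
    have ih := ih (Nat.le_of_succ_le hn)
    obtain ⟨i, rfl⟩ : ∃ i : Fin r, i.val = n := ⟨⟨n, hn⟩, rfl⟩
    rintro y ⟨hy, hyN⟩
    rw [imageSum_succ] at hy ⊢
    obtain ⟨m, hm, _, ⟨x, hx, rfl⟩, rfl⟩ := Submodule.mem_sup.1 hy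
    have hTx : T i x ∈ imageSum T P i ⊔ N := by
      rw [← add_sub_cancel_left m (T i x), sub_eq_neg_add]
      exact Submodule.add_mem_sup (neg_mem hm) hyN
    obtain ⟨m', hm', z, hz, rfl⟩ := Submodule.mem_sup.1 (hQ i x hx hTx)
    have hTz := Submodule.mem_map_of_mem (f := T i) hz
    rw [map_add, ← add_assoc] at hyN ⊢
    refine Submodule.add_mem_sup (ih ⟨add_mem hm (apply_mem_imageSum hT hP i hm'), ?_⟩) hTz
    exact (add_mem_cancel_right (hN i hTz)).1 hyN

/-- A commuting family that is weakly regular on `N` and on `P / N` is weakly regular on `P`. -/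
theorem mem_imageSum_of_apply_mem (hT : ∀ i j x, T i (T j x) = T j (T i x))
    (hNP : N ≤ P) (hP : ∀ j, P.map (T j) ≤ P) (hN : ∀ j, N.map (T j) ≤ N)
    (hQ : ∀ i : Fin r, ∀ x ∈ P, T i x ∈ imageSum T P i ⊔ N → x ∈ imageSum T P i ⊔ N)
    (hregN : ∀ i : Fin r, ∀ x ∈ N, T i x ∈ imageSum T N i → x ∈ imageSum T N i)
    (i : Fin r) {x : V} (hx : x ∈ P) (hTx : T i x ∈ imageSum T P i) :
    x ∈ imageSum T P i := by
  obtain ⟨m, hm, z, hz, rfl⟩ := Submodule.mem_sup.1 (hQ i x hx (Submodule.mem_sup_left hTx))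
  rw [map_add, add_mem_cancel_left (apply_mem_imageSum hT hP i hm)] at hTx
  refine add_mem hm (imageSum_mono_left hNP (hregN i z hz ?_))
  exact imageSum_inf_le hT hP hN hQ i.2.le ⟨hTx, hN i (Submodule.mem_map_of_mem hz)⟩

end AbstractFiltration

section OrderFiltration

variable {R : Type*} [CommRing R] {r k : ℕ} {f : Fin r → R}

theorem tOp_single (i : Fin r) (β : Idx r k) (a : R) :
    tOp R r f k i (single β a) = f i • single β a - (β.1 i) • single
      (⟨β.1 - Pi.single i 1,
        le_trans (Finset.sum_le_sum fun _ _ => Nat.sub_le _ _) β.2⟩ : Idx r k) a := by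
  simp [tOp, smul_sub, mul_comm]

theorem tOp_comm (i j : Fin r) (x : Mk R r k) :
    tOp R r f k i (tOp R r f k j x) = tOp R r f k j (tOp R r f k i x) := by
  rcases eq_or_ne i j with rfl | hij
  · rfl
  induction x using Finsupp.induction_linear with
  | zero => simp
  | add x y hx hy => simp only [map_add, hx, hy]
  | single β a =>
    have hsub : β.1 - Pi.single i 1 - Pi.single j 1 = β.1 - Pi.single j 1 - Pi.single i 1 :=
      tsub_right_comm
    simp only [tOp_single, map_sub, map_smul, map_nsmul, Pi.sub_apply, hsub,
      Pi.single_eq_of_ne hij, Pi.single_eq_of_ne hij.symm, tsub_zero]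
    module

variable (R r k) in
/-- The submodule of `M_k` spanned by the basis vectors `e_β` with `|β| < d`. -/
def orderLT (d : ℕ) : Submodule R (Mk R r k) :=
  Finsupp.supported R R {β : Idx r k | ∑ i, β.1 i < d}

theorem single_mem_orderLT {d : ℕ} {β : Idx r k} (h : ∑ i, β.1 i < d) (a : R) :
    single β a ∈ orderLT R r k d :=
  Finsupp.single_mem_supported R a h

theorem orderLT_apply_eq_zero {d : ℕ} {x : Mk R r k} (hx : x ∈ orderLT R r k d) {β : Idx r k}
    (h : d ≤ ∑ i, β.1 i) : x β = 0 :=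
  (Finsupp.mem_supported' R x).1 hx β h.not_gt

theorem orderLT_mono {d e : ℕ} (h : d ≤ e) : orderLT R r k d ≤ orderLT R r k e :=
  Finsupp.supported_mono fun _ hβ => lt_of_lt_of_le hβ h

theorem orderLT_zero : orderLT R r k 0 = ⊥ := by
  simp [orderLT]

theorem orderLT_succ_self : orderLT R r k (k + 1) = ⊤ := by
  rw [orderLT, ← Finsupp.supported_univ]
  congr 1
  exact Set.eq_univ_of_forall fun β => Nat.lt_succ_of_le β.2

theorem tOp_sub_smul_mem_orderLT (i : Fin r) {d : ℕ} {x : Mk R r k}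
    (hx : x ∈ orderLT R r k (d + 1)) : tOp R r f k i x - f i • x ∈ orderLT R r k d := by
  suffices h : orderLT R r k (d + 1) ≤
      (orderLT R r k d).comap (tOp R r f k i - f i • LinearMap.id) from h hx
  rw [orderLT, Finsupp.supported_eq_span_single, Submodule.span_le]
  rintro _ ⟨β, hβ, rfl⟩
  simp only [Set.mem_ofPred_eq] at hβ
  simp only [SetLike.mem_coe, Submodule.mem_comap, LinearMap.sub_apply, LinearMap.smul_apply,
    LinearMap.id_apply, tOp_single, sub_sub_cancel_left]
  refine neg_mem ?_
  rcases Nat.eq_zero_or_pos (β.1 i) with h | h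
  · simp [h]
  · refine nsmul_mem (single_mem_orderLT ?_ _) _
    refine lt_of_lt_of_le (Finset.sum_lt_sum (fun _ _ => Nat.sub_le _ _) ⟨i, Finset.mem_univ _, ?_⟩)
      (Nat.le_of_lt_succ hβ)
    simpa using h

theorem map_tOp_orderLT_le (d : ℕ) (i : Fin r) :
    (orderLT R r k d).map (tOp R r f k i) ≤ orderLT R r k d := by
  rintro _ ⟨x, hx, rfl⟩
  have h := tOp_sub_smul_mem_orderLT (f := f) i (orderLT_mono d.le_succ hx)
  simpa using add_mem h (Submodule.smul_mem _ (f i) hx)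

theorem tOp_apply_of_sum_eq (i : Fin r) {d : ℕ} {x : Mk R r k}
    (hx : x ∈ orderLT R r k (d + 1)) {β : Idx r k} (hβ : ∑ i, β.1 i = d) :
    tOp R r f k i x β = f i * x β := by
  have h := orderLT_apply_eq_zero (tOp_sub_smul_mem_orderLT (f := f) i hx) hβ.ge
  simpa [sub_eq_zero] using h

theorem apply_mem_span_of_mem_imageSum {n d : ℕ} {x : Mk R r k}
    (hx : x ∈ imageSum (tOp R r f k) (orderLT R r k (d + 1)) n ⊔ orderLT R r k d)
    {β : Idx r k} (hβ : ∑ i, β.1 i = d) : x β ∈ Ideal.span (f '' {j | j.val < n}) := by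
  suffices h : imageSum (tOp R r f k) (orderLT R r k (d + 1)) n ⊔ orderLT R r k d ≤
      Submodule.comap (Finsupp.lapply β) (Ideal.span (f '' {j | j.val < n})) from h hx
  refine sup_le (imageSum_le.2 fun j hj => ?_) fun y hy => ?_
  · rintro _ ⟨y, hy, rfl⟩
    rw [Submodule.mem_comap, Finsupp.lapply_apply, tOp_apply_of_sum_eq j hy hβ]
    exact Ideal.mul_mem_right _ _ (Ideal.subset_span ⟨j, hj, rfl⟩)
  · rw [Submodule.mem_comap, Finsupp.lapply_apply, orderLT_apply_eq_zero hy hβ.ge]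
    exact zero_mem _

theorem mem_imageSum_sup_of_apply_mem_span {n d : ℕ} {x : Mk R r k}
    (hx : x ∈ orderLT R r k (d + 1))
    (h : ∀ β : Idx r k, ∑ i, β.1 i = d → x β ∈ Ideal.span (f '' {j | j.val < n})) :
    x ∈ imageSum (tOp R r f k) (orderLT R r k (d + 1)) n ⊔ orderLT R r k d := by
  rw [← Finsupp.sum_single x]
  refine Submodule.sum_mem _ fun β hβ => ?_
  rcases Nat.lt_succ_iff_lt_or_eq.1 (hx hβ) with hlt | heq
  · exact Submodule.mem_sup_right (single_mem_orderLT hlt _)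
  suffices hle : Ideal.span (f '' {j | j.val < n}) ≤ Submodule.comap (Finsupp.lsingle β)
      (imageSum (tOp R r f k) (orderLT R r k (d + 1)) n ⊔ orderLT R r k d) from hle (h β heq)
  rw [Ideal.span_le]
  rintro _ ⟨j, hj, rfl⟩
  have hβ' : single β (1 : R) ∈ orderLT R r k (d + 1) :=
    single_mem_orderLT (Nat.lt_succ_of_le heq.le) _
  have hmap : tOp R r f k j (single β 1) ∈
      imageSum (tOp R r f k) (orderLT R r k (d + 1)) n :=
    map_le_imageSum hj (Submodule.mem_map_of_mem hβ')
  have hsingle : single β (f j) = tOp R r f k j (single β 1) -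
      (tOp R r f k j (single β 1) - f j • single β 1) := by
    rw [sub_sub_cancel, Finsupp.smul_single, smul_eq_mul, mul_one]
  rw [SetLike.mem_coe, Submodule.mem_comap, Finsupp.lsingle_apply, hsingle]
  exact sub_mem (Submodule.mem_sup_left hmap)
    (Submodule.mem_sup_right (tOp_sub_smul_mem_orderLT j hβ'))

theorem tOp_regular_on_orderLT
    (hreg : ∀ i : Fin r, ∀ x : R,
      f i * x ∈ Ideal.span (f '' {j | j < i}) → x ∈ Ideal.span (f '' {j | j < i}))
    (d : ℕ) (i : Fin r) (x : Mk R r k) (hx : x ∈ orderLT R r k d)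
    (hTx : tOp R r f k i x ∈ imageSum (tOp R r f k) (orderLT R r k d) i) :
    x ∈ imageSum (tOp R r f k) (orderLT R r k d) i := by
  induction d generalizing i x with
  | zero =>
    rw [orderLT_zero, Submodule.mem_bot] at hx
    rw [hx]
    exact zero_mem _
  | succ d ih =>
    have hQ : ∀ i : Fin r, ∀ x ∈ orderLT R r k (d + 1),
        tOp R r f k i x ∈ imageSum (tOp R r f k) (orderLT R r k (d + 1)) i ⊔ orderLT R r k d →
        x ∈ imageSum (tOp R r f k) (orderLT R r k (d + 1)) i ⊔ orderLT R r k d := by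
      intro i x hx hTx
      refine mem_imageSum_sup_of_apply_mem_span hx fun β hβ => hreg i _ ?_
      rw [← tOp_apply_of_sum_eq i hx hβ]
      exact apply_mem_span_of_mem_imageSum hTx hβ
    exact mem_imageSum_of_apply_mem (T := tOp R r f k) (tOp_comm (f := f))
      (orderLT_mono (Nat.le_add_right d 1))
      (map_tOp_orderLT_le (f := f) (d + 1)) (map_tOp_orderLT_le (f := f) d) hQ ih i hx hTx

theorem partialImage_eq_imageSum (i : Fin r) :
    partialImage R r f k i = imageSum (tOp R r f k) (orderLT R r k (k + 1)) i := by
  simp only [partialImage, imageSum, orderLT_succ_self, Submodule.map_top, Fin.lt_def]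

theorem iSup_range_tOp_ne_top (hne : Ideal.span (Set.range f) ≠ ⊤) :
    (⨆ j : Fin r, LinearMap.range (tOp R r f k j)) ≠ ⊤ := by
  intro htop
  obtain ⟨β, hβ⟩ : ∃ β : Idx r k, ∀ _ : Fin r, ∑ i, β.1 i = k := by
    cases r with
    | zero => exact ⟨⟨0, by simp⟩, fun j => j.elim0⟩
    | succ r => exact ⟨⟨Pi.single 0 k, by simp⟩, fun _ => by simp⟩
  have hle : (⨆ j : Fin r, LinearMap.range (tOp R r f k j)) ≤
      Submodule.comap (Finsupp.lapply β) (Ideal.span (Set.range f)) := by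
    refine iSup_le fun j => ?_
    rintro _ ⟨y, rfl⟩
    rw [Submodule.mem_comap, Finsupp.lapply_apply,
      tOp_apply_of_sum_eq j (orderLT_succ_self (R := R) ▸ Submodule.mem_top) (hβ j)]
    exact Ideal.mul_mem_right _ _ (Ideal.subset_span ⟨j, rfl⟩)
  have hone : single β (1 : R) ∈ (⨆ j : Fin r, LinearMap.range (tOp R r f k j)) :=
    htop ▸ Submodule.mem_top
  exact hne ((Ideal.eq_top_iff_one _).2 (by simpa using hle hone))

end OrderFiltration

/-- Lemma 6.3: if `f₁,…,f_r` is a regular sequence in `R`, then for every `k ≥ 0` the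
sequence `t₁,…,t_r` is a regular sequence on `M_k = F_k B_f`: each `t_i` is injective
modulo `(t₁,…,t_{i-1}) M_k`, and `(t₁,…,t_r) M_k ≠ M_k`. -/
theorem t_regular_on_Mk
    (hreg : ∀ i : Fin r, ∀ x : R,
      f i * x ∈ Ideal.span (f '' {j | j < i}) → x ∈ Ideal.span (f '' {j | j < i}))
    (hne : Ideal.span (Set.range f) ≠ ⊤) :
    ∀ k : ℕ,
      (∀ i : Fin r, ∀ x : Mk R r k,
        tOp R r f k i x ∈ partialImage R r f k i → x ∈ partialImage R r f k i) ∧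
      (⨆ j : Fin r, LinearMap.range (tOp R r f k j)) ≠ ⊤ := by
  refine fun k => ⟨fun i x hTx => ?_, iSup_range_tOp_ne_top hne⟩
  rw [partialImage_eq_imageSum] at hTx ⊢
  exact tOp_regular_on_orderLT hreg _ i x (orderLT_succ_self (R := R) ▸ Submodule.mem_top) hTx

end
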